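/- For all natural numbers k and l and all x, z ∈ F: (-1)^{l+1} Σ_{j=0}^{l+1} [l+1 choose j]_q x^{l+1-j} [k+j+1]_q A*_{k+j}(z) q^{(k+1)(l-j)+1} = (-1)^k Σ_{j=0}^{k+1} [k+1 choose j]_q x^{k+1-j} [l+j+1]_q A_{l+j}([1,-z,-x]) q^{(k-j)(k-j-1)/2 - j}. -/

import Mathlib

open Finset

/-- The q-Pochhammer symbol `(a;q)_n = ∏_{j=0}^{n-1} (1 - a q^j)`. -/
def qPoch {F : Type*} [Field F] (q a : F) (n : ℕ) : F :=
  ∏ j ∈ Finset.range n, (1 - a * q ^ j)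

/-- The q-binomial coefficient `[n choose i]_q`, equal to 0 when `i > n`. -/
def qBinom {F : Type*} [Field F] (q : F) (n i : ℕ) : F :=
  if i ≤ n then qPoch q q n / (qPoch q q i * qPoch q q (n - i)) else 0

/-- The q-integer `[n]_q = (1-q^n)/(1-q)`. -/
def qInt {F : Type*} [Field F] (q : F) (n : ℕ) : F := (1 - q ^ n) / (1 - q)

/-- The q-dual sequence `a*_n = ∑_{i=0}^n (-1)^i [n choose i]_q q^{i(i-1)/2} a_i`. -/
def qDual {F : Type*} [Field F] (q : F) (a : ℕ → F) (n : ℕ) : F :=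
  ∑ i ∈ Finset.range (n + 1), (-1 : F) ^ i * qBinom q n i * q ^ (i.choose 2) * a i
/-- The q-factorial `[n]_q! = ∏_{j=1}^n [j]_q`. -/
def qFact {F : Type*} [Field F] (q : F) (n : ℕ) : F :=
  ∏ j ∈ Finset.range n, qInt q (j + 1)

/-- `[u,v,w]^n = ∑_{i+j+k=n} ([n]_q!/([i]_q![j]_q![k]_q!)) u^i v^j w^k`. -/
def qBracket3 {F : Type*} [Field F] (q : F) (n : ℕ) (u v w : F) : F :=
  ∑ i ∈ Finset.range (n + 1), ∑ j ∈ Finset.range (n + 1 - i),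
    qFact q n / (qFact q i * qFact q j * qFact q (n - i - j)) *
      (u ^ i * v ^ j * w ^ (n - i - j))

/-- `A_n(x) = ∑_{i=0}^n (-1)^i [n choose i]_q q^{i(i-1)/2} a_i x^{n-i}`. -/
def Apoly {F : Type*} [Field F] (q : F) (a : ℕ → F) (n : ℕ) (x : F) : F :=
  ∑ i ∈ Finset.range (n + 1), (-1 : F) ^ i * qBinom q n i * q ^ (i.choose 2) * a i * x ^ (n - i)

/-- `A*_n(x) = ∑_{i=0}^n (-1)^i [n choose i]_q a*_i x^{n-i}`. -/
def AstarPoly {F : Type*} [Field F] (q : F) (a : ℕ → F) (n : ℕ) (x : F) : F :=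
  ∑ i ∈ Finset.range (n + 1), (-1 : F) ^ i * qBinom q n i * qDual q a i * x ^ (n - i)

/-- `A_n([1,-z,-x]) = ∑_{i=0}^n (-1)^i [n choose i]_q q^{i(i-1)/2} a_i [1,-z,-x]^{n-i}`. -/
def ApolyTri {F : Type*} [Field F] (q : F) (a : ℕ → F) (n : ℕ) (z x : F) : F :=
  ∑ i ∈ Finset.range (n + 1), (-1 : F) ^ i * qBinom q n i * q ^ (i.choose 2) * a i *
    qBracket3 q (n - i) 1 (-z) (-x)

/-! Let `u * v` be the `q`-binomial convolution, which multiplies the `q`-exponential generating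
functions `∑ uₙ tⁿ / [n]_q!`. The index shift `E` acts on these as the `q`-derivative and satisfies
the `q`-Leibniz rule `E (u * v) = u * E v + E u * (qⁱ vᵢ)`. For `v = (yⁱ)` this reads
`(E - y) (c * (yⁱ)) = E c * ((q y)ⁱ)`, so `∏_{s<m} (E - q^s y)` sends `c * (yⁱ)` to
`E^m c * ((q^m y)ⁱ)`, while the `q`-binomial theorem expands that product as a convolution with
`q^(i choose 2) (-y)ⁱ`. The theorem is the resulting reciprocity for `y = -x`, `c_0 = 0` and
`c_{i+1} = (-1)^i [i+1]_q A*_i(z)`, because `A_n([1,-z,-x])` is the convolution of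
`(-1)^i A*_i(z)` with `(-x)^i`. -/

lemma ne_one_of_not_isOfFinOrder {M : Type*} [Monoid M] {x : M} (hx : ¬IsOfFinOrder x) : x ≠ 1 :=
  fun h => hx (h ▸ IsOfFinOrder.one)

section QBinomial

variable {F : Type*} [Field F] {q : F}

lemma qInt_zero (q : F) : qInt q 0 = 0 := by simp [qInt]

lemma qInt_add (q : F) (m n : ℕ) : qInt q (m + n) = qInt q m + q ^ m * qInt q n := by
  simp only [qInt]
  ring

lemma qInt_ne_zero (hq : ¬IsOfFinOrder q) {n : ℕ} (hn : 0 < n) : qInt q n ≠ 0 := by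
  refine div_ne_zero (sub_ne_zero.mpr fun h => hq ?_)
    (sub_ne_zero.mpr (ne_one_of_not_isOfFinOrder hq).symm)
  exact isOfFinOrder_iff_pow_eq_one.mpr ⟨n, hn, h.symm⟩

lemma qFact_zero (q : F) : qFact q 0 = 1 := prod_range_zero _

lemma qFact_succ (q : F) (n : ℕ) : qFact q (n + 1) = qFact q n * qInt q (n + 1) :=
  prod_range_succ _ n

lemma qFact_ne_zero (hq : ¬IsOfFinOrder q) (n : ℕ) : qFact q n ≠ 0 :=
  prod_ne_zero_iff.mpr fun j _ => qInt_ne_zero hq j.succ_pos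

lemma qFact_eq_qPoch_div (q : F) (n : ℕ) : qFact q n = qPoch q q n / (1 - q) ^ n := by
  simp [qFact, qPoch, qInt, prod_div_distrib, pow_succ']

lemma qBinom_of_lt {n i : ℕ} (h : n < i) : qBinom q n i = 0 := if_neg h.not_ge

lemma qBinom_add_eq_qFact_div (hq : q ≠ 1) (i j : ℕ) :
    qBinom q (i + j) i = qFact q (i + j) / (qFact q i * qFact q j) := by
  have h : (1 - q) ^ (i + j) ≠ 0 := pow_ne_zero _ (sub_ne_zero.mpr hq.symm)
  rw [qBinom, if_pos (Nat.le_add_right i j), Nat.add_sub_cancel_left]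
  simp only [qFact_eq_qPoch_div]
  rw [div_mul_div_comm, ← pow_add, div_div_div_cancel_right₀ h]

lemma qBinom_zero_right (hq : ¬IsOfFinOrder q) (n : ℕ) : qBinom q n 0 = 1 := by
  have h := qBinom_add_eq_qFact_div (ne_one_of_not_isOfFinOrder hq) 0 n
  rwa [zero_add, qFact_zero, one_mul, div_self (qFact_ne_zero hq n)] at h

lemma qBinom_self (hq : ¬IsOfFinOrder q) (n : ℕ) : qBinom q n n = 1 := by
  have h := qBinom_add_eq_qFact_div (ne_one_of_not_isOfFinOrder hq) n 0
  rwa [add_zero, qFact_zero, mul_one, div_self (qFact_ne_zero hq n)] at h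

lemma qBinom_succ_succ (hq : ¬IsOfFinOrder q) (n i : ℕ) :
    qBinom q (n + 1) (i + 1) = qBinom q n (i + 1) + q ^ (n - i) * qBinom q n i := by
  rcases lt_trichotomy n i with h | rfl | h
  · simp [qBinom_of_lt h, qBinom_of_lt (Nat.succ_lt_succ h), qBinom_of_lt (h.trans i.lt_succ_self)]
  · simp [qBinom_self hq, qBinom_of_lt n.lt_succ_self]
  · obtain ⟨r, rfl⟩ := Nat.exists_eq_add_of_lt h
    have hq1 := ne_one_of_not_isOfFinOrder hq
    have hsplit : qInt q (i + r + 1 + 1) = qInt q (r + 1) + q ^ (r + 1) * qInt q (i + 1) := by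
      rw [← qInt_add]
      congr 1
      omega
    have htop : qBinom q (i + r + 1 + 1) (i + 1) =
        qFact q (i + r + 1 + 1) / (qFact q (i + 1) * qFact q (r + 1)) := by
      rw [show i + r + 1 + 1 = i + 1 + (r + 1) by omega, qBinom_add_eq_qFact_div hq1]
    have hright : qBinom q (i + r + 1) (i + 1) =
        qFact q (i + r + 1) / (qFact q (i + 1) * qFact q r) := by
      rw [show i + r + 1 = i + 1 + r by omega, qBinom_add_eq_qFact_div hq1]
    rw [htop, hright, add_assoc i r 1, qBinom_add_eq_qFact_div hq1, Nat.add_sub_cancel_left,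
      ← add_assoc i r 1, qFact_succ q (i + r + 1), hsplit, qFact_succ q i, qFact_succ q r]
    have := qFact_ne_zero hq i
    have := qFact_ne_zero hq r
    have := qInt_ne_zero hq i.succ_pos
    have := qInt_ne_zero hq r.succ_pos
    field_simp

lemma qInt_mul_qBinom (hq : ¬IsOfFinOrder q) (n i : ℕ) :
    qInt q (n + 1) * qBinom q n i = qInt q (i + 1) * qBinom q (n + 1) (i + 1) := by
  rcases lt_or_ge n i with h | h
  · simp [qBinom_of_lt h, qBinom_of_lt (Nat.succ_lt_succ h)]
  · obtain ⟨r, rfl⟩ := Nat.exists_eq_add_of_le h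
    have hq1 := ne_one_of_not_isOfFinOrder hq
    have := qFact_ne_zero hq i
    have := qFact_ne_zero hq r
    have := qInt_ne_zero hq i.succ_pos
    rw [qBinom_add_eq_qFact_div hq1, add_right_comm, qBinom_add_eq_qFact_div hq1, add_right_comm,
      qFact_succ q i, qFact_succ q (i + r)]
    field_simp

end QBinomial

section QConvolution

variable {F : Type*} [Field F] {q : F}

/-- The `q`-binomial convolution of two sequences, the product that corresponds to multiplying their
`q`-exponential generating functions `∑ uₙ tⁿ / [n]_q!`. -/
def qConv (q : F) (u v : ℕ → F) (n : ℕ) : F :=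
  ∑ i ∈ range (n + 1), qBinom q n i * u i * v (n - i)

lemma qConv_add_left (q : F) (u₁ u₂ v : ℕ → F) :
    qConv q (u₁ + u₂) v = qConv q u₁ v + qConv q u₂ v := by
  funext n
  simp only [qConv, Pi.add_apply, mul_add, add_mul, sum_add_distrib]

lemma qConv_add_right (q : F) (u v₁ v₂ : ℕ → F) :
    qConv q u (v₁ + v₂) = qConv q u v₁ + qConv q u v₂ := by
  funext n
  simp only [qConv, Pi.add_apply, mul_add, sum_add_distrib]

lemma qConv_smul_left (q c : F) (u v : ℕ → F) : qConv q (c • u) v = c • qConv q u v := by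
  funext n
  simp only [qConv, Pi.smul_apply, smul_eq_mul, mul_sum, mul_assoc, mul_left_comm c]

lemma qConv_smul_right (q c : F) (u v : ℕ → F) : qConv q u (c • v) = c • qConv q u v := by
  funext n
  simp only [qConv, Pi.smul_apply, smul_eq_mul, mul_sum, mul_left_comm c]

lemma pow_mul_qConv (q c : F) (u v : ℕ → F) (n : ℕ) :
    c ^ n * qConv q u v n = qConv q (fun i => c ^ i * u i) (fun i => c ^ i * v i) n := by
  rw [qConv, mul_sum]
  refine sum_congr rfl fun i hi => ?_
  rw [← pow_mul_pow_sub c (mem_range_succ_iff.mp hi)]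
  ring

lemma qConv_zero (hq : ¬IsOfFinOrder q) (u v : ℕ → F) : qConv q u v 0 = u 0 * v 0 := by
  simp [qConv, qBinom_zero_right hq]

lemma qConv_succ (hq : ¬IsOfFinOrder q) (u v : ℕ → F) (n : ℕ) :
    qConv q u v (n + 1) = qConv q u (fun i => v (i + 1)) n +
      qConv q (fun i => u (i + 1)) (fun i => q ^ i * v i) n := by
  have hext : qConv q u (fun i => v (i + 1)) n =
      ∑ i ∈ range (n + 1 + 1), qBinom q n i * u i * v (n + 1 - i) := by
    rw [sum_range_succ, qBinom_of_lt n.lt_succ_self, zero_mul, zero_mul, add_zero]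
    refine sum_congr rfl fun i hi => ?_
    rw [Nat.sub_add_comm (mem_range_succ_iff.mp hi)]
  rw [hext, sum_range_succ', qConv, sum_range_succ', qBinom_zero_right hq, qBinom_zero_right hq,
    add_right_comm, qConv, ← sum_add_distrib]
  congr 1
  refine sum_congr rfl fun i _ => ?_
  rw [qBinom_succ_succ hq, Nat.add_sub_add_right]
  ring

lemma qConv_assoc (hq : ¬IsOfFinOrder q) (u v w : ℕ → F) :
    qConv q (qConv q u v) w = qConv q u (qConv q v w) := by
  funext n
  induction n generalizing u v w with
  | zero => simp only [qConv_zero hq, mul_assoc]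
  | succ n ih =>
    have shift (u v : ℕ → F) : (fun i => qConv q u v (i + 1)) =
        qConv q u (fun i => v (i + 1)) + qConv q (fun i => u (i + 1)) (fun i => q ^ i * v i) :=
      funext (qConv_succ hq u v)
    have scale : (fun i => q ^ i * qConv q v w i) =
        qConv q (fun i => q ^ i * v i) (fun i => q ^ i * w i) :=
      funext (pow_mul_qConv q q v w)
    simp only [qConv_succ hq _ _ n, shift, scale, qConv_add_left, qConv_add_right, Pi.add_apply, ih,
      add_assoc]

lemma qInt_mul_qConv (hq : ¬IsOfFinOrder q) (u v : ℕ → F) (n : ℕ) :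
    qInt q (n + 1) * qConv q u v n = qConv q (fun i => qInt q i * u (i - 1)) v (n + 1) := by
  rw [qConv, qConv, sum_range_succ' _ (n + 1), qInt_zero, zero_mul, mul_zero, zero_mul, add_zero,
    mul_sum]
  refine sum_congr rfl fun i _ => ?_
  rw [Nat.add_sub_cancel, Nat.add_sub_add_right]
  linear_combination u i * v (n - i) * qInt_mul_qBinom hq n i

lemma qConv_pow_succ (hq : ¬IsOfFinOrder q) (c : ℕ → F) (y : F) (n : ℕ) :
    qConv q c (fun i => y ^ i) (n + 1) =
      y * qConv q c (fun i => y ^ i) n + qConv q (fun i => c (i + 1)) (fun i => (q * y) ^ i) n := by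
  have hshift : (fun i => y ^ (i + 1)) = y • fun i => y ^ i := funext fun i => pow_succ' y i
  simp only [qConv_succ hq, hshift, qConv_smul_right, Pi.smul_apply, smul_eq_mul, mul_pow]

lemma qConv_pow_choose_two_mul_pow_succ (hq : ¬IsOfFinOrder q) (f : ℕ → F) (y : F) (n : ℕ) :
    qConv q f (fun i => q ^ i.choose 2 * y ^ i) (n + 1) =
      qConv q ((fun j => f (j + 1)) + y • f) (fun i => q ^ i.choose 2 * (q * y) ^ i) n := by
  have hshift : (fun i => q ^ (i + 1).choose 2 * y ^ (i + 1)) =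
      y • fun i => q ^ i.choose 2 * (q * y) ^ i := by
    funext i
    rw [Pi.smul_apply, smul_eq_mul, Nat.choose_succ_succ' i 1, Nat.choose_one_right]
    ring
  have hscale : (fun i => q ^ i * (q ^ i.choose 2 * y ^ i)) =
      fun i => q ^ i.choose 2 * (q * y) ^ i := by
    funext i
    ring
  rw [qConv_succ hq, hshift, hscale, qConv_smul_right, qConv_add_left, qConv_smul_left, add_comm]
  rfl

theorem qConv_pow_reciprocity (hq : ¬IsOfFinOrder q) (c : ℕ → F) (y : F) (m n : ℕ) :
    qConv q (fun j => qConv q c (fun i => y ^ i) (n + j)) (fun i => q ^ i.choose 2 * (-y) ^ i) m =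
      qConv q (fun j => c (m + j)) (fun i => (q ^ m * y) ^ i) n := by
  induction m generalizing c y with
  | zero => simp [qConv_zero hq]
  | succ m ih =>
    have hstep : (fun j => qConv q c (fun i => y ^ i) (n + (j + 1))) +
          -y • (fun j => qConv q c (fun i => y ^ i) (n + j)) =
        fun j => qConv q (fun i => c (i + 1)) (fun i => (q * y) ^ i) (n + j) := by
      funext j
      simp only [Pi.add_apply, Pi.smul_apply, smul_eq_mul, ← add_assoc, qConv_pow_succ hq]
      ring
    rw [qConv_pow_choose_two_mul_pow_succ hq, hstep, mul_neg, ih]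
    simp only [add_right_comm m, pow_succ, mul_assoc]

theorem qConv_qInt_mul_pow_reciprocity (hq : ¬IsOfFinOrder q) (b : ℕ → F) (y : F) (k l : ℕ) :
    qConv q (fun j => qInt q (k + j + 1) * b (k + j)) (fun i => (q ^ (k + 1) * y) ^ i) (l + 1) =
      qConv q (fun j => qInt q (l + j + 1) * qConv q b (fun i => y ^ i) (l + j))
        (fun i => q ^ i.choose 2 * (-y) ^ i) (k + 1) := by
  have h := qConv_pow_reciprocity hq (fun i => qInt q i * b (i - 1)) y (k + 1) (l + 1)
  simpa only [add_right_comm _ 1, ← qInt_mul_qConv hq, Nat.add_sub_cancel] using h.symm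

end QConvolution

section DualPolynomials

variable {F : Type*} [Field F] {q : F}

lemma qDual_eq_qConv (q : F) (a : ℕ → F) :
    qDual q a = qConv q (fun i => (-1) ^ i * q ^ i.choose 2 * a i) (fun _ => 1) :=
  funext fun _ => sum_congr rfl fun _ _ => by ring

lemma AstarPoly_eq_qConv (q : F) (a : ℕ → F) (n : ℕ) (z : F) :
    AstarPoly q a n z = qConv q (fun i => (-1) ^ i * qDual q a i) (fun i => z ^ i) n :=
  sum_congr rfl fun _ _ => by ring

lemma ApolyTri_eq_qConv (q : F) (a : ℕ → F) (n : ℕ) (z x : F) :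
    ApolyTri q a n z x = qConv q (fun i => (-1) ^ i * q ^ i.choose 2 * a i)
      (fun i => qBracket3 q i 1 (-z) (-x)) n :=
  sum_congr rfl fun _ _ => by ring

lemma qBracket3_eq_qConv (hq : ¬IsOfFinOrder q) (n : ℕ) (u v w : F) :
    qBracket3 q n u v w =
      qConv q (fun i => u ^ i) (qConv q (fun i => v ^ i) (fun i => w ^ i)) n := by
  have hq1 := ne_one_of_not_isOfFinOrder hq
  refine sum_congr rfl fun i hi => ?_
  obtain ⟨r, rfl⟩ := Nat.exists_eq_add_of_le (mem_range_succ_iff.mp hi)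
  rw [add_assoc, Nat.add_sub_cancel_left, Nat.add_sub_cancel_left, qConv, mul_sum]
  refine sum_congr rfl fun j hj => ?_
  obtain ⟨s, rfl⟩ := Nat.exists_eq_add_of_le (mem_range_succ_iff.mp hj)
  have := qFact_ne_zero hq (j + s)
  rw [Nat.add_sub_cancel_left, qBinom_add_eq_qFact_div hq1, qBinom_add_eq_qFact_div hq1]
  field_simp

lemma ApolyTri_eq_qConv_AstarPoly (hq : ¬IsOfFinOrder q) (a : ℕ → F) (n : ℕ) (z x : F) :
    ApolyTri q a n z x =
      qConv q (fun i => (-1) ^ i * AstarPoly q a i z) (fun i => (-x) ^ i) n := by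
  have hdual : (fun i => (-1) ^ i * AstarPoly q a i z) =
      qConv q (qDual q a) (fun i => (-z) ^ i) := by
    funext i
    rw [AstarPoly_eq_qConv, pow_mul_qConv]
    simp only [← mul_assoc, ← mul_pow, neg_one_mul, neg_neg, one_pow, one_mul]
  rw [ApolyTri_eq_qConv, hdual, qDual_eq_qConv, qConv_assoc hq, qConv_assoc hq]
  simp only [qBracket3_eq_qConv hq, one_pow]

end DualPolynomials

section Exponents

lemma sub_mul_sub_one_ediv_two_sub {j k : ℕ} (h : j ≤ k + 1) :
    ((k : ℤ) - j) * ((k : ℤ) - j - 1) / 2 - j = -k + (k + 1 - j).choose 2 := by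
  obtain ⟨i, hi⟩ := Nat.exists_eq_add_of_le h
  have hk : (k : ℤ) = j + i - 1 := by omega
  have hchoose : (i.choose 2 : ℤ) * 2 = i * (i - 1) := by
    have := Nat.cast_choose_two ℚ i
    field_simp at this
    exact_mod_cast this
  rw [hi, Nat.add_sub_cancel_left, sub_eq_iff_eq_add]
  refine Int.ediv_eq_of_eq_mul_left two_ne_zero ?_
  rw [hk]
  linear_combination -hchoose

variable {F : Type*} [Field F] {q : F}

lemma zpow_sub_mul_sub_one_ediv_two_sub (hq0 : q ≠ 0) {j k : ℕ} (h : j ≤ k + 1) :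
    q ^ (((k : ℤ) - j) * ((k : ℤ) - j - 1) / 2 - (j : ℤ)) =
      q ^ (-k : ℤ) * q ^ (k + 1 - j).choose 2 := by
  rw [sub_mul_sub_one_ediv_two_sub h, zpow_add₀ hq0, zpow_natCast]

lemma zpow_add_one_mul_sub_add_one (hq0 : q ≠ 0) {j l : ℕ} (k : ℕ) (h : j ≤ l + 1) :
    q ^ (((k : ℤ) + 1) * ((l : ℤ) - j) + 1) = q ^ (-k : ℤ) * (q ^ (k + 1)) ^ (l + 1 - j) := by
  have hexp : ((k : ℤ) + 1) * ((l : ℤ) - j) + 1 = -k + ((k + 1) * (l + 1 - j) : ℕ) := by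
    push_cast [h]
    ring
  rw [hexp, zpow_add₀ hq0, zpow_natCast, pow_mul]

lemma neg_one_pow_mul_neg_one_pow_mul_neg_pow {R : Type*} [Ring R] {j l : ℕ} (k : ℕ)
    (h : j ≤ l + 1) (x : R) :
    (-1) ^ k * ((-1) ^ (k + j) * (-x) ^ (l + 1 - j)) = (-1) ^ (l + 1) * x ^ (l + 1 - j) := by
  rw [neg_pow x, ← mul_assoc, ← mul_assoc, ← pow_add, ← pow_add,
    show k + (k + j) + (l + 1 - j) = 2 * k + (l + 1) by omega, pow_add, pow_mul, neg_one_sq,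
    one_pow, one_mul]

end Exponents

theorem stmt5 {F : Type*} [Field F] (q : F) (hq0 : q ≠ 0)
    (hq : ∀ m : ℕ, 0 < m → q ^ m ≠ 1) (a : ℕ → F) (k l : ℕ) (x z : F) :
    (-1 : F) ^ (l + 1) * ∑ j ∈ Finset.range (l + 2), qBinom q (l + 1) j *
        x ^ (l + 1 - j) * qInt q (k + j + 1) * AstarPoly q a (k + j) z *
        q ^ (((k : ℤ) + 1) * ((l : ℤ) - j) + 1) =
    (-1 : F) ^ k * ∑ j ∈ Finset.range (k + 2), qBinom q (k + 1) j *
        x ^ (k + 1 - j) * qInt q (l + j + 1) * ApolyTri q a (l + j) z x *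
        q ^ ((((k : ℤ) - j) * ((k : ℤ) - j - 1)) / 2 - (j : ℤ)) := by
  have hq' : ¬IsOfFinOrder q := by simpa [isOfFinOrder_iff_pow_eq_one] using hq
  calc
    _ = (-1) ^ k * q ^ (-k : ℤ) *
        qConv q (fun j => qInt q (k + j + 1) * ((-1) ^ (k + j) * AstarPoly q a (k + j) z))
          (fun i => (q ^ (k + 1) * -x) ^ i) (l + 1) := by
      rw [qConv, mul_sum, mul_sum]
      refine sum_congr rfl fun j hj => ?_
      have hj := mem_range_succ_iff.mp hj
      rw [zpow_add_one_mul_sub_add_one hq0 k hj, mul_pow]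
      linear_combination -(qBinom q (l + 1) j * qInt q (k + j + 1) * AstarPoly q a (k + j) z *
        (q ^ (-k : ℤ) * (q ^ (k + 1)) ^ (l + 1 - j))) *
          neg_one_pow_mul_neg_one_pow_mul_neg_pow k hj x
    _ = (-1) ^ k * q ^ (-k : ℤ) * qConv q (fun j => qInt q (l + j + 1) * ApolyTri q a (l + j) z x)
          (fun i => q ^ i.choose 2 * x ^ i) (k + 1) := by
      simp only [qConv_qInt_mul_pow_reciprocity hq' (fun i => (-1) ^ i * AstarPoly q a i z) (-x),
        ApolyTri_eq_qConv_AstarPoly hq', neg_neg]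
    _ = _ := by
      rw [qConv, mul_assoc, mul_sum]
      congr 1
      refine sum_congr rfl fun j hj => ?_
      rw [zpow_sub_mul_sub_one_ediv_two_sub hq0 (mem_range_succ_iff.mp hj)]
      ring
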